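/- Let p, q ∈ R be idempotents such that p + q and 1 - p - q are group invertible. Then p*q + q*p is group invertible; indeed p*q + q*p = -(p+q)*(1-p-q) = -(1-p-q)*(p+q) and (p*q + q*p)^# = -(p+q)^# * (1-p-q)^#. -/

import Mathlib

/-!
Put `a = p + q` and `b = 1 - p - q = 1 - a`. Expanding with `p² = p`, `q² = q` gives
`p q + q p = a² - a = -(a b) = -(b a)`. A group inverse of `a` lies in the double commutant of `a`
(`IsGroupInvOf.commute`), so `a`, `b` and their group inverses all commute with one another, and
for commuting elements the group inverse of a product is the product of the group inverses
(`IsGroupInvOf.mul`). Uniqueness of the group inverse then identifies `gi (p q + q p)`.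
-/

variable {R : Type*} [Ring R]

/-- `c` is a group inverse of `a`. -/
def IsGroupInvOf (a c : R) : Prop := a * c * a = a ∧ c * a * c = c ∧ a * c = c * a

/-- `a` is group invertible. -/
def GroupInvertible (a : R) : Prop := ∃ c, IsGroupInvOf a c

/-- The group inverse `a^#` (junk value `0` if it does not exist). -/
noncomputable def gi (a : R) : R :=
  haveI := Classical.dec (GroupInvertible a)
  if h : GroupInvertible a then h.choose else 0

/-- The spectral idempotent `a^π = 1 - a * a^#`. -/
noncomputable def sp (a : R) : R := 1 - a * gi a

/-- A group inverse of `a` lies in the double commutant of `a`. -/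
theorem IsGroupInvOf.commute {a c x : R} (h : IsGroupInvOf a c) (hx : Commute a x) :
    Commute c x := by
  obtain ⟨h1, h2, h3⟩ := h
  have hx : a * x = x * a := hx
  -- With `e = a c = c a`, both `e x` and `x e` equal `e x e`.
  have e1 : c * a * x = c * a * x * (c * a) := by
    calc c * a * x = c * (a * x) := mul_assoc _ _ _
      _ = c * x * (a * c * a) := by rw [hx, h1, mul_assoc]
      _ = c * (x * a) * (c * a) := by noncomm_ring
      _ = c * a * x * (c * a) := by rw [← hx]; noncomm_ring
  have e2 : x * (c * a) = c * a * x * (c * a) := by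
    calc x * (c * a) = x * a * c := by rw [← h3, mul_assoc]
      _ = a * c * a * x * c := by rw [h1, hx]
      _ = c * a * (a * x) * c := by rw [h3]; noncomm_ring
      _ = c * a * x * (a * c) := by rw [hx]; noncomm_ring
      _ = c * a * x * (c * a) := by rw [h3]
  have e : c * a * x = x * (c * a) := e1.trans e2.symm
  calc c * x = c * (c * a * x) := by
        conv_lhs => rw [← h2, mul_assoc c a c, h3]
        noncomm_ring
    _ = c * x * (a * c) := by rw [e, h3]; noncomm_ring
    _ = c * (x * a) * c := by noncomm_ring
    _ = c * a * x * c := by rw [← hx]; noncomm_ring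
    _ = x * (c * a * c) := by rw [e]; noncomm_ring
    _ = x * c := by rw [h2]

theorem IsGroupInvOf.unique {a c d : R} (hc : IsGroupInvOf a c) (hd : IsGroupInvOf a d) :
    c = d := by
  obtain ⟨h1, h2, h3⟩ := hc
  obtain ⟨k1, k2, k3⟩ := hd
  have e : c * a = d * a := by
    calc c * a = c * (a * d * a) := by rw [k1]
      _ = a * c * (a * d) := by rw [mul_assoc a d a, ← k3, ← mul_assoc, ← h3]
      _ = a * c * a * d := by noncomm_ring
      _ = d * a := by rw [h1, k3]
  calc c = c * a * c := h2.symm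
    _ = d * (a * c) := by rw [e, mul_assoc]
    _ = d * a * d := by rw [h3, e, mul_assoc d a d, k3]
    _ = d := k2

theorem isGroupInvOf_gi {a : R} (h : GroupInvertible a) : IsGroupInvOf a (gi a) := by
  unfold gi
  rw [dif_pos h]
  exact h.choose_spec

theorem IsGroupInvOf.neg {a c : R} (h : IsGroupInvOf a c) : IsGroupInvOf (-a) (-c) := by
  obtain ⟨h1, h2, h3⟩ := h
  exact ⟨by simp [h1], by simp [h2], by simp [h3]⟩

/-- The group inverse is multiplicative on commuting elements. -/
theorem IsGroupInvOf.mul {a b c d : R} (hc : IsGroupInvOf a c) (hd : IsGroupInvOf b d)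
    (hab : Commute a b) : IsGroupInvOf (a * b) (c * d) := by
  have hcb : Commute c b := hc.commute hab
  have hda : Commute d a := hd.commute hab.symm
  have hdc : Commute d c := hd.commute hcb.symm
  obtain ⟨h1, h2, h3⟩ := hc
  obtain ⟨k1, k2, k3⟩ := hd
  have m1 : a * b * (c * d) = a * c * (b * d) := hcb.symm.mul_mul_mul_comm a d
  have m2 : c * d * (a * b) = c * a * (d * b) := hda.mul_mul_mul_comm c b
  refine ⟨?_, ?_, ?_⟩
  · rw [m1, (hab.symm.mul_left hda).mul_mul_mul_comm (a * c) b, h1, k1]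
  · rw [m2, (hdc.mul_left hcb.symm).mul_mul_mul_comm (c * a) d, h2, k2]
  · rw [m1, m2, h3, k3]

theorem group_inv_anticommutator (p q : R) (hp : p * p = p) (hq : q * q = q)
    (hsum : GroupInvertible (p + q)) (hbar : GroupInvertible (1 - p - q)) :
    GroupInvertible (p * q + q * p) ∧
      p * q + q * p = -((p + q) * (1 - p - q)) ∧
      p * q + q * p = -((1 - p - q) * (p + q)) ∧
      gi (p * q + q * p) = -(gi (p + q) * gi (1 - p - q)) := by
  have e1 : p * q + q * p = -((p + q) * (1 - p - q)) := by
    simp only [mul_sub, add_mul, mul_one, hp, hq]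
    abel
  have e2 : p * q + q * p = -((1 - p - q) * (p + q)) := by
    simp only [mul_add, sub_mul, one_mul, hp, hq]
    abel
  have hcomm : Commute (p + q) (1 - p - q) := neg_injective (e1.symm.trans e2)
  have hinv : IsGroupInvOf (p * q + q * p) (-(gi (p + q) * gi (1 - p - q))) := by
    rw [e1]
    exact ((isGroupInvOf_gi hsum).mul (isGroupInvOf_gi hbar) hcomm).neg
  have hG : GroupInvertible (p * q + q * p) := ⟨_, hinv⟩
  exact ⟨hG, e1, e2, (isGroupInvOf_gi hG).unique hinv⟩
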